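/- Fix integers d ≥ 2, q with 1 ≤ q ≤ d-1, γ with 0 ≤ γ ≤ q-1, and reals K < 0, u > 0, and let f be the density f_{d,q,γ,K} of the distance d_K(o,E∩L). Then for every real α ≤ 0 the integral ∫_0^∞ δ^α · f(δ) dδ is finite if and only if α > γ - q. -/

import Mathlib

open Real MeasureTheory Filter Asymptotics

/-- Surface area `ω_n = 2 π^{n/2} / Γ(n/2)` of the Euclidean unit sphere in `ℝ^n`. -/
noncomputable def omegaS (n : ℕ) : ℝ := 2 * Real.pi ^ ((n : ℝ) / 2) / Real.Gamma ((n : ℝ) / 2)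

/-- The constant `D(d,q,γ)`. -/
noncomputable def Dconst (d q γ : ℕ) : ℝ :=
  omegaS (γ + 1) * omegaS (q - γ) * omegaS (d - q) / (omegaS (d - q + γ + 1) * omegaS (d - γ))

/-- `R_K(x)`, the Euclidean (Beltrami–Klein) radius of a hyperbolic ball of radius `x`. -/
noncomputable def RK (K x : ℝ) : ℝ :=
  Real.sinh (Real.sqrt (-K) * x) /
    (Real.sqrt (-K) * Real.sqrt (1 + Real.sinh (Real.sqrt (-K) * x) ^ 2))

/-- `C_K(d,m,u)`, the invariant measure of the `m`-flats meeting the ball of radius `u`. -/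
noncomputable def Cconst (K : ℝ) (d m : ℕ) (u : ℝ) : ℝ :=
  omegaS (d - m) * Real.sqrt (-K) ^ (-(d : ℝ) + (m : ℝ) + 1) *
    ∫ r in (0:ℝ)..u,
      Real.cosh (Real.sqrt (-K) * r) ^ m * Real.sinh (Real.sqrt (-K) * r) ^ (d - m - 1)

/-- `P(d,q,γ,K,u)`, the hyperbolic intersection probability of the random flats `E` and `L`. -/
noncomputable def Pprob (d q γ : ℕ) (K u : ℝ) : ℝ :=
  Dconst d q γ * omegaS (d - γ) / Cconst K d (d - q + γ) u *
    ∫ r in (0:ℝ)..(1 / Real.sqrt (-K)),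
      r ^ ((q : ℝ) - (γ : ℝ) - 1) *
        ∫ z in (0:ℝ)..(min 1 (RK K u / r)),
          z ^ q * (1 - z ^ 2) ^ (((d : ℝ) - (q : ℝ)) / 2 - 1) *
            (1 + K * r ^ 2 * z ^ 2) ^ (-((d : ℝ) + 1) / 2)

/-- `F_{K,u}(δ)`, the distribution function of the distance of `E ∩ L` to the origin. -/
noncomputable def Fdist (d q γ : ℕ) (K u δ : ℝ) : ℝ :=
  Dconst d q γ * omegaS (d - γ) / Cconst K d (d - q + γ) u *
    ∫ r in (0:ℝ)..(RK K δ),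
      r ^ ((q : ℝ) - (γ : ℝ) - 1) *
        ∫ z in (0:ℝ)..(min 1 (RK K u / r)),
          z ^ q * (1 - z ^ 2) ^ (((d : ℝ) - (q : ℝ)) / 2 - 1) *
            (1 + K * r ^ 2 * z ^ 2) ^ (-((d : ℝ) + 1) / 2)

/-- `f_{d,q,γ,K}(δ)`, the density of the distance of `E ∩ L` to the origin. -/
noncomputable def fdens (d q γ : ℕ) (K u δ : ℝ) : ℝ :=
  Dconst d q γ * omegaS (d - γ) / Cconst K d (d - q + γ) u *
    (RK K δ ^ ((q : ℝ) - (γ : ℝ) - 1) / Real.cosh (Real.sqrt (-K) * δ) ^ 2) *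
    ∫ z in (0:ℝ)..(min 1 (RK K u / RK K δ)),
      z ^ q * (1 - z ^ 2) ^ (((d : ℝ) - (q : ℝ)) / 2 - 1) *
        (1 + K * RK K δ ^ 2 * z ^ 2) ^ (-((d : ℝ) + 1) / 2)

/-- The limiting constant `ρ(u,q,γ,κ)` in the critical phase. -/
noncomputable def rhoConst (u : ℝ) (q γ : ℕ) (κ : ℝ) : ℝ :=
  omegaS (γ + 1) * (2 * Real.pi) ^ (-((γ : ℝ) + 1) / 2) * u ^ (q + 1) *
    κ ^ (((γ : ℝ) + 1) / 2) *
    (∫ s in (0:ℝ)..u, Real.exp (κ * s ^ 2 / 2) * s ^ ((q : ℝ) - (γ : ℝ) - 1))⁻¹ *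
    ∫ r in (0:ℝ)..1,
      r ^ ((q : ℝ) - (γ : ℝ) - 1) *
        ∫ v in (0:ℝ)..(1 / r),
          v ^ q * Real.exp (-(1 / 2) * u ^ 2 * κ * v ^ 2 * (1 - r ^ 2))

lemma aux_omega_pos (n : ℕ) (hn : 1 ≤ n) : 0 < omegaS n := by
  unfold omegaS
  have h : (0:ℝ) < (n:ℝ) / 2 := by
    have : (1:ℝ) ≤ n := by exact_mod_cast hn
    linarith
  have := Real.Gamma_pos_of_pos h
  positivity

lemma aux_RK (K x : ℝ) : RK K x =
    Real.sinh (Real.sqrt (-K) * x) / (Real.sqrt (-K) * Real.cosh (Real.sqrt (-K) * x)) := by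
  unfold RK
  have : 1 + Real.sinh (Real.sqrt (-K) * x) ^ 2 = Real.cosh (Real.sqrt (-K) * x) ^ 2 := by
    rw [Real.cosh_sq]; ring
  rw [this, Real.sqrt_sq (Real.cosh_pos _).le]

lemma aux_RK_pos (K x : ℝ) (hK : K < 0) (hx : 0 < x) : 0 < RK K x := by
  rw [aux_RK]
  have hk : 0 < Real.sqrt (-K) := Real.sqrt_pos.2 (by linarith)
  have := Real.cosh_pos (Real.sqrt (-K) * x)
  have : 0 < Real.sinh (Real.sqrt (-K) * x) := Real.sinh_pos_iff.2 (by positivity)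
  positivity

lemma aux_RK_sq (K x : ℝ) (hK : K < 0) :
    1 + K * RK K x ^ 2 = 1 / Real.cosh (Real.sqrt (-K) * x) ^ 2 := by
  rw [aux_RK]
  have hk : 0 < Real.sqrt (-K) := Real.sqrt_pos.2 (by linarith)
  have h2 : Real.sqrt (-K) ^ 2 = -K := Real.sq_sqrt (by linarith)
  have hc := Real.cosh_pos (Real.sqrt (-K) * x)
  have h3 := Real.cosh_sq (Real.sqrt (-K) * x)
  rw [div_pow, mul_pow, h2]
  have hK' : K ≠ 0 := hK.ne
  field_simp
  rw [h3]; ring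

lemma aux_c_pos (K x : ℝ) (hK : K < 0) : 0 < 1 + K * RK K x ^ 2 := by
  rw [aux_RK_sq K x hK]
  have hc := Real.cosh_pos (Real.sqrt (-K) * x)
  positivity

lemma aux_RK_mono (K x y : ℝ) (hK : K < 0) (hx : 0 < x) (hxy : x ≤ y) : RK K x ≤ RK K y := by
  have hk : 0 < Real.sqrt (-K) := Real.sqrt_pos.2 (by linarith)
  have h1 := aux_RK_sq K x hK
  have h2 := aux_RK_sq K y hK
  have hc := Real.cosh_pos (Real.sqrt (-K) * x)
  have hc2 : Real.cosh (Real.sqrt (-K) * x) ≤ Real.cosh (Real.sqrt (-K) * y) := by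
    apply Real.cosh_le_cosh.2
    rw [abs_of_pos (by positivity), abs_of_pos (mul_pos hk (by linarith))]
    gcongr
  have h3 : 1 / Real.cosh (Real.sqrt (-K) * y) ^ 2 ≤ 1 / Real.cosh (Real.sqrt (-K) * x) ^ 2 := by
    gcongr
  rw [← h1, ← h2] at h3
  have h4 : RK K x ^ 2 ≤ RK K y ^ 2 := by nlinarith
  exact (sq_le_sq₀ (aux_RK_pos K x hK hx).le (aux_RK_pos K y hK (by linarith)).le).1 h4

lemma aux_RK_le (K x : ℝ) (hK : K < 0) (hx : 0 < x) : RK K x ≤ x := by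
  rw [aux_RK]
  have hk : 0 < Real.sqrt (-K) := Real.sqrt_pos.2 (by linarith)
  have hc := Real.cosh_pos (Real.sqrt (-K) * x)
  rw [div_le_iff₀ (by positivity)]
  have h : ∀ y : ℝ, 0 ≤ y → Real.sinh y ≤ y * Real.cosh y := by
    have hm : MonotoneOn (fun y : ℝ => y * Real.cosh y - Real.sinh y) (Set.Ici 0) := by
      apply monotoneOn_of_deriv_nonneg (convex_Ici 0)
      · fun_prop
      · fun_prop
      · intro y hy
        rw [interior_Ici] at hy
        have : HasDerivAt (fun y : ℝ => y * Real.cosh y - Real.sinh y)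
            (1 * Real.cosh y + y * Real.sinh y - Real.cosh y) y :=
          ((hasDerivAt_id y).mul (Real.hasDerivAt_cosh y)).sub (Real.hasDerivAt_sinh y)
        rw [this.deriv]
        have : 0 < Real.sinh y := Real.sinh_pos_iff.2 hy
        have hy' : 0 < y := hy
        nlinarith [mul_pos hy' this]
    intro y hy
    have := hm (Set.mem_Ici.2 le_rfl) (Set.mem_Ici.2 hy) hy
    simp at this
    linarith
  have := h (Real.sqrt (-K) * x) (by positivity)
  linarith

lemma aux_RK_ge (K x u : ℝ) (hK : K < 0) (hx : 0 < x) (hxu : x ≤ u) :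
    x / Real.cosh (Real.sqrt (-K) * u) ≤ RK K x := by
  rw [aux_RK]
  have hk : 0 < Real.sqrt (-K) := Real.sqrt_pos.2 (by linarith)
  have hc := Real.cosh_pos (Real.sqrt (-K) * x)
  have hc2 : Real.cosh (Real.sqrt (-K) * x) ≤ Real.cosh (Real.sqrt (-K) * u) := by
    apply Real.cosh_le_cosh.2
    rw [abs_of_pos (by positivity), abs_of_pos (mul_pos hk (by linarith))]
    gcongr
  have hs : Real.sqrt (-K) * x ≤ Real.sinh (Real.sqrt (-K) * x) :=
    Real.self_le_sinh_iff.2 (by positivity)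
  calc x / Real.cosh (Real.sqrt (-K) * u) ≤ x / Real.cosh (Real.sqrt (-K) * x) := by gcongr
    _ = Real.sqrt (-K) * x / (Real.sqrt (-K) * Real.cosh (Real.sqrt (-K) * x)) := by
      field_simp
    _ ≤ _ := by gcongr

lemma aux_w_int (q : ℕ) (s : ℝ) (hs : -1 < s) :
    IntervalIntegrable (fun z : ℝ => z ^ q * (1 - z ^ 2) ^ s) volume 0 1 := by
  have h1 : IntervalIntegrable (fun z : ℝ => (1 - z) ^ s) volume 0 1 := by
    have := (intervalIntegral.intervalIntegrable_rpow' (a := 0) (b := 1) hs).comp_sub_left 1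
    simpa using this.symm
  have h2 : IntervalIntegrable (fun z : ℝ => (1 - z) ^ s * (z ^ q * (1 + z) ^ s)) volume 0 1 := by
    apply h1.mul_continuousOn
    apply ContinuousOn.mul (by fun_prop)
    apply ContinuousOn.rpow_const (by fun_prop)
    intro z hz
    rw [Set.uIcc_of_le zero_le_one] at hz
    left
    linarith [hz.1]
  apply h2.congr
  intro z hz
  rw [Set.uIoc_of_le zero_le_one] at hz
  have : 1 - z ^ 2 = (1 - z) * (1 + z) := by ring
  simp only
  rw [this, Real.mul_rpow (by linarith [hz.2]) (by linarith [hz.1])]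
  ring

lemma aux_w_pos (q : ℕ) (s : ℝ) (hs : -1 < s) :
    0 < ∫ z in (0:ℝ)..1, z ^ q * (1 - z ^ 2) ^ s := by
  apply intervalIntegral.intervalIntegral_pos_of_pos_on (aux_w_int q s hs) _ zero_lt_one
  intro z hz
  have h1 : 0 < 1 - z ^ 2 := by nlinarith [hz.1, hz.2]
  have := hz.1
  positivity

lemma aux_base (K Ru R z m : ℝ) (hK : K < 0) (hR : 0 < R)
    (hm : m ≤ Ru / R) (h0 : 0 ≤ z) (hz : z ≤ m) :
    1 + K * Ru ^ 2 ≤ 1 + K * R ^ 2 * z ^ 2 ∧ 1 + K * R ^ 2 * z ^ 2 ≤ 1 := by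
  have h : z * R ≤ Ru := by rw [← le_div_iff₀ hR]; linarith
  have h2 : (z * R) ^ 2 ≤ Ru ^ 2 := by
    have : 0 ≤ z * R := by positivity
    gcongr
  constructor
  · nlinarith
  · have : 0 ≤ R ^ 2 * z ^ 2 := by positivity
    nlinarith

lemma aux_inner (q : ℕ) (s e K Ru R : ℝ) (hs : -1 < s) (he : e ≤ 0) (hK : K < 0) (hR : 0 < R)
    (hRu : 0 < Ru) (hc : 0 < 1 + K * Ru ^ 2) :
    (0 ≤ ∫ z in (0:ℝ)..(min 1 (Ru / R)),
      z ^ q * (1 - z ^ 2) ^ s * (1 + K * R ^ 2 * z ^ 2) ^ e) ∧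
    (∫ z in (0:ℝ)..(min 1 (Ru / R)),
      z ^ q * (1 - z ^ 2) ^ s * (1 + K * R ^ 2 * z ^ 2) ^ e) ≤
      (∫ z in (0:ℝ)..1, z ^ q * (1 - z ^ 2) ^ s) * (1 + K * Ru ^ 2) ^ e ∧
    (R ≤ Ru → (∫ z in (0:ℝ)..1, z ^ q * (1 - z ^ 2) ^ s) ≤
      ∫ z in (0:ℝ)..(min 1 (Ru / R)),
      z ^ q * (1 - z ^ 2) ^ s * (1 + K * R ^ 2 * z ^ 2) ^ e) := by
  set m := min 1 (Ru / R) with hmdef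
  have hm0 : 0 < m := by rw [hmdef]; positivity
  have hm1 : m ≤ 1 := min_le_left _ _
  have hm2 : m ≤ Ru / R := min_le_right _ _
  have hb := fun z => aux_base K Ru R z m hK hR hm2
  have hw := aux_w_int q s hs
  have hw0 : ∀ z : ℝ, 0 ≤ z → z ≤ 1 → 0 ≤ z ^ q * (1 - z ^ 2) ^ s := by
    intro z h0 h1
    have : 0 ≤ 1 - z ^ 2 := by nlinarith
    positivity
  have hwm : IntervalIntegrable (fun z : ℝ => z ^ q * (1 - z ^ 2) ^ s) volume 0 m := by
    apply hw.mono_set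
    rw [Set.uIcc_of_le hm0.le, Set.uIcc_of_le zero_le_one]
    exact Set.Icc_subset_Icc_right hm1
  have hi : IntervalIntegrable (fun z : ℝ => z ^ q * (1 - z ^ 2) ^ s *
      (1 + K * R ^ 2 * z ^ 2) ^ e) volume 0 m := by
    apply hwm.mul_continuousOn
    apply ContinuousOn.rpow_const (by fun_prop)
    intro z hz
    rw [Set.uIcc_of_le hm0.le] at hz
    left
    linarith [(hb z hz.1 hz.2).1]
  refine ⟨?_, ?_, ?_⟩
  · apply intervalIntegral.integral_nonneg hm0.le
    intro z hz
    have h1 := hw0 z hz.1 (hz.2.trans hm1)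
    have h2 : 0 ≤ 1 + K * R ^ 2 * z ^ 2 := by linarith [(hb z hz.1 hz.2).1]
    positivity
  · calc _ ≤ ∫ z in (0:ℝ)..m, z ^ q * (1 - z ^ 2) ^ s * (1 + K * Ru ^ 2) ^ e := by
          apply intervalIntegral.integral_mono_on hm0.le hi (hwm.mul_const _)
          intro z hz
          have h1 := hw0 z hz.1 (hz.2.trans hm1)
          have h2 := (hb z hz.1 hz.2).1
          exact mul_le_mul_of_nonneg_left (Real.rpow_le_rpow_of_nonpos hc h2 he) h1
      _ = (∫ z in (0:ℝ)..m, z ^ q * (1 - z ^ 2) ^ s) * (1 + K * Ru ^ 2) ^ e := by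
          rw [intervalIntegral.integral_mul_const]
      _ ≤ _ := by
          apply mul_le_mul_of_nonneg_right _ (Real.rpow_nonneg hc.le _)
          apply intervalIntegral.integral_mono_interval le_rfl hm0.le hm1 _ hw
          filter_upwards [ae_restrict_mem measurableSet_Ioc] with z hz
          exact hw0 z hz.1.le hz.2
  · intro hRR
    have hm : m = 1 := min_eq_left ((one_le_div hR).2 hRR)
    rw [hm] at hi hb ⊢
    apply intervalIntegral.integral_mono_on zero_le_one hw hi
    intro z hz
    have h1 := hw0 z hz.1 hz.2
    have h2 := hb z hz.1 hz.2
    have : 1 ≤ (1 + K * R ^ 2 * z ^ 2) ^ e :=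
      Real.one_le_rpow_of_pos_of_le_one_of_nonpos (by linarith) h2.2 he
    exact le_mul_of_one_le_right h1 this

lemma aux_RK_meas (K : ℝ) : Measurable (RK K) := by
  unfold RK
  have h1 := Real.measurable_sinh
  fun_prop

lemma aux_J_meas (q : ℕ) (s e K Ru : ℝ) (hRu : 0 < Ru) :
    AEStronglyMeasurable (fun δ : ℝ => ∫ z in (0:ℝ)..(min 1 (Ru / RK K δ)),
      z ^ q * (1 - z ^ 2) ^ s * (1 + K * RK K δ ^ 2 * z ^ 2) ^ e)
      (volume.restrict (Set.Ioi 0)) := by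
  have hR := aux_RK_meas K
  have key : StronglyMeasurable (fun δ : ℝ => ∫ z : ℝ,
      Set.indicator {p : ℝ × ℝ | 0 < p.2 ∧ p.2 ≤ min 1 (Ru / RK K p.1)}
        (fun p : ℝ × ℝ => p.2 ^ q * (1 - p.2 ^ 2) ^ s * (1 + K * RK K p.1 ^ 2 * p.2 ^ 2) ^ e)
        (δ, z)) := by
    apply StronglyMeasurable.integral_prod_right' (f := Set.indicator
      {p : ℝ × ℝ | 0 < p.2 ∧ p.2 ≤ min 1 (Ru / RK K p.1)}
        (fun p : ℝ × ℝ => p.2 ^ q * (1 - p.2 ^ 2) ^ s * (1 + K * RK K p.1 ^ 2 * p.2 ^ 2) ^ e))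
    apply Measurable.stronglyMeasurable
    apply Measurable.indicator
    · fun_prop
    · have m1 : MeasurableSet {p : ℝ × ℝ | 0 < p.2} :=
        measurableSet_lt measurable_const measurable_snd
      have m2 : MeasurableSet {p : ℝ × ℝ | p.2 ≤ min 1 (Ru / RK K p.1)} :=
        measurableSet_le measurable_snd (by fun_prop)
      exact m1.inter m2
  refine key.aestronglyMeasurable.congr ?_
  filter_upwards [ae_restrict_mem measurableSet_Ioi] with δ hδ
  have hpos : 0 ≤ min 1 (Ru / RK K δ) := by
    have : 0 ≤ RK K δ := by
      unfold RK
      have hδ' : 0 < δ := hδ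
      have : 0 ≤ Real.sinh (Real.sqrt (-K) * δ) := Real.sinh_nonneg_iff.2 (by positivity)
      positivity
    positivity
  rw [intervalIntegral.integral_of_le hpos, ← integral_indicator measurableSet_Ioc]
  rfl

theorem negative_moments (d q γ : ℕ) (hd : 2 ≤ d) (hq1 : 1 ≤ q) (hq2 : q ≤ d - 1)
    (hγ : γ ≤ q - 1) (K u : ℝ) (hK : K < 0) (hu : 0 < u) :
    ∀ α : ℝ, α ≤ 0 →
      (MeasureTheory.IntegrableOn (fun δ : ℝ => δ ^ α * fdens d q γ K u δ)
          (Set.Ioi (0 : ℝ)) ↔ (γ : ℝ) - (q : ℝ) < α) := by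
  intro α hα
  have hk : 0 < Real.sqrt (-K) := Real.sqrt_pos.2 (by linarith)
  have hA : 0 < Dconst d q γ * omegaS (d - γ) / Cconst K d (d - q + γ) u := by
    have h1 := aux_omega_pos (γ + 1) (by omega)
    have h2 := aux_omega_pos (q - γ) (by omega)
    have h3 := aux_omega_pos (d - q) (by omega)
    have h4 := aux_omega_pos (d - q + γ + 1) (by omega)
    have h5 := aux_omega_pos (d - γ) (by omega)
    have h6 := aux_omega_pos (d - (d - q + γ)) (by omega)
    have h7 : 0 < ∫ r in (0:ℝ)..u, Real.cosh (Real.sqrt (-K) * r) ^ (d - q + γ) *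
        Real.sinh (Real.sqrt (-K) * r) ^ (d - (d - q + γ) - 1) := by
      apply intervalIntegral.intervalIntegral_pos_of_pos_on _ _ hu
      · apply Continuous.intervalIntegrable
        fun_prop
      · intro x hx
        have hx0 := hx.1
        have := Real.cosh_pos (Real.sqrt (-K) * x)
        have : 0 < Real.sinh (Real.sqrt (-K) * x) := Real.sinh_pos_iff.2 (by positivity)
        positivity
    unfold Dconst Cconst
    positivity
  set A := Dconst d q γ * omegaS (d - γ) / Cconst K d (d - q + γ) u with hAdef
  have hp : (0:ℝ) ≤ (q:ℝ) - γ - 1 := by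
    have : γ + 1 ≤ q := by omega
    have : (γ:ℝ) + 1 ≤ q := by exact_mod_cast this
    linarith
  set p : ℝ := (q:ℝ) - γ - 1 with hpdef
  have hs : -1 < ((d:ℝ) - q) / 2 - 1 := by
    have : q + 1 ≤ d := by omega
    have : (q:ℝ) + 1 ≤ d := by exact_mod_cast this
    linarith
  have he : -((d:ℝ) + 1) / 2 ≤ 0 := by
    have : (0:ℝ) ≤ d := Nat.cast_nonneg d
    linarith
  have hRu := aux_RK_pos K u hK hu
  have hc := aux_c_pos K u hK
  have hJ := fun (δ : ℝ) (hδ : 0 < δ) =>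
    aux_inner q _ _ K (RK K u) (RK K δ) hs he hK (aux_RK_pos K δ hK hδ) hRu hc
  have hJm := aux_J_meas q (((d:ℝ) - q) / 2 - 1) (-((d:ℝ) + 1) / 2) K (RK K u) hRu
  have hB := aux_w_pos q _ hs
  set B := ∫ z in (0:ℝ)..1, z ^ q * (1 - z ^ 2) ^ (((d:ℝ) - q) / 2 - 1) with hBdef
  set J : ℝ → ℝ := fun δ => ∫ z in (0:ℝ)..(min 1 (RK K u / RK K δ)),
      z ^ q * (1 - z ^ 2) ^ (((d : ℝ) - (q : ℝ)) / 2 - 1) *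
        (1 + K * RK K δ ^ 2 * z ^ 2) ^ (-((d : ℝ) + 1) / 2) with hJdef
  set M := B * (1 + K * RK K u ^ 2) ^ (-((d:ℝ) + 1) / 2) with hMdef
  have hM : 0 < M := by positivity
  have hf : ∀ δ, fdens d q γ K u δ =
    A * (RK K δ ^ p / Real.cosh (Real.sqrt (-K) * δ) ^ 2) * J δ := fun δ => rfl
  have hJ' : ∀ δ, 0 < δ → 0 ≤ J δ ∧ J δ ≤ M ∧ (RK K δ ≤ RK K u → B ≤ J δ) := hJ
  clear_value J M B A
  have hmeas : AEStronglyMeasurable (fun δ : ℝ => δ ^ α * fdens d q γ K u δ)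
      (volume.restrict (Set.Ioi 0)) := by
    simp_rw [hf]
    have hR := aux_RK_meas K
    have hch := Real.measurable_cosh
    have h1 : Measurable (fun δ : ℝ => δ ^ α) := by fun_prop
    have h2 : Measurable (fun δ : ℝ => A * (RK K δ ^ p / Real.cosh (Real.sqrt (-K) * δ) ^ 2)) := by
      fun_prop
    exact h1.aestronglyMeasurable.mul (h2.aestronglyMeasurable.mul hJm)
  constructor
  · intro hI
    have hI2 : IntegrableOn (fun δ : ℝ => δ ^ α * fdens d q γ K u δ) (Set.Ioo 0 u) :=
      hI.mono_set Set.Ioo_subset_Ioi_self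
    set C := Real.cosh (Real.sqrt (-K) * u) with hC
    have hCp : 0 < C := Real.cosh_pos _
    set N := A * ((1 / C) ^ p / C ^ 2) * B with hN
    have hNp : 0 < N := by positivity
    have hI3 : IntegrableOn (fun δ : ℝ => δ ^ (α + p)) (Set.Ioo 0 u) := by
      apply (hI2.const_mul N⁻¹).mono' (by
        have : Measurable (fun δ : ℝ => δ ^ (α + p)) := by fun_prop
        exact this.aestronglyMeasurable)
      filter_upwards [ae_restrict_mem measurableSet_Ioo] with δ hδ
      have h0 : 0 < δ := hδ.1
      rw [Real.norm_of_nonneg (by positivity), Real.rpow_add h0, hf]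
      have hRl := aux_RK_mono K δ u hK h0 hδ.2.le
      have hJl := (hJ' δ h0).2.2 hRl
      have hg := aux_RK_ge K δ u hK h0 hδ.2.le
      rw [← hC] at hg
      have hcc : Real.cosh (Real.sqrt (-K) * δ) ≤ C := by
        apply Real.cosh_le_cosh.2
        rw [abs_of_pos (by positivity), abs_of_pos (by positivity)]
        have := hδ.2.le
        gcongr
      have hcp := Real.cosh_pos (Real.sqrt (-K) * δ)
      have hpow : δ ^ p * (1 / C) ^ p ≤ RK K δ ^ p := by
        rw [← Real.mul_rpow h0.le (by positivity)]
        apply Real.rpow_le_rpow (by positivity) _ hp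
        rw [mul_one_div]; exact hg
      have hRp := aux_RK_pos K δ hK h0
      calc δ ^ α * δ ^ p = N⁻¹ * (δ ^ α * (A * ((δ ^ p * (1 / C) ^ p) / C ^ 2) * B)) := by
            rw [hN]
            have : 0 < (1 / C) ^ p := by positivity
            field_simp
        _ ≤ _ := by gcongr
    have := (intervalIntegral.integrableOn_Ioo_rpow_iff hu).1 hI3
    rw [hpdef] at this
    linarith
  · intro h
    rw [← Set.Ioc_union_Ioi_eq_Ioi (zero_le_one' ℝ)]
    apply IntegrableOn.union
    · have h1 : IntegrableOn (fun δ : ℝ => A * M * δ ^ (α + p)) (Set.Ioc 0 1) := by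
        apply Integrable.const_mul
        have := (intervalIntegral.intervalIntegrable_rpow' (a := 0) (b := 1) (r := α + p)
          (by rw [hpdef]; linarith))
        exact (intervalIntegrable_iff_integrableOn_Ioc_of_le zero_le_one).1 this
      apply h1.mono' (hmeas.mono_set Set.Ioc_subset_Ioi_self)
      filter_upwards [ae_restrict_mem measurableSet_Ioc] with δ hδ
      have h0 : 0 < δ := hδ.1
      have hRp := aux_RK_pos K δ hK h0
      have hcp := Real.cosh_pos (Real.sqrt (-K) * δ)
      have hc1 := Real.one_le_cosh (Real.sqrt (-K) * δ)
      obtain ⟨j0, j1, -⟩ := hJ' δ h0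
      rw [hf, Real.norm_of_nonneg (by positivity), Real.rpow_add h0]
      have hpow : RK K δ ^ p ≤ δ ^ p := Real.rpow_le_rpow hRp.le (aux_RK_le K δ hK h0) hp
      have hdiv : RK K δ ^ p / Real.cosh (Real.sqrt (-K) * δ) ^ 2 ≤ δ ^ p :=
        (div_le_self (by positivity) (one_le_pow₀ hc1)).trans hpow
      calc _ ≤ δ ^ α * (A * δ ^ p * M) := by gcongr
        _ = _ := by ring
    · have h1 : IntegrableOn (fun δ : ℝ =>
          A * M * ((1 / Real.sqrt (-K)) ^ p / Real.sqrt (-K) ^ 2) * δ ^ (-2 : ℝ)) (Set.Ioi 1) := by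
        apply Integrable.const_mul
        exact integrableOn_Ioi_rpow_of_lt (by norm_num) zero_lt_one
      apply h1.mono' (hmeas.mono_set (Set.Ioi_subset_Ioi zero_le_one))
      filter_upwards [ae_restrict_mem measurableSet_Ioi] with δ hδ
      have hδ1 : 1 < δ := hδ
      have h0 : 0 < δ := by linarith
      have hRp := aux_RK_pos K δ hK h0
      have hcp := Real.cosh_pos (Real.sqrt (-K) * δ)
      have hsc := Real.sinh_lt_cosh (Real.sqrt (-K) * δ)
      have hss : Real.sqrt (-K) * δ ≤ Real.sinh (Real.sqrt (-K) * δ) :=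
        Real.self_le_sinh_iff.2 (by positivity)
      obtain ⟨j0, j1, -⟩ := hJ' δ h0
      rw [hf, Real.norm_of_nonneg (by positivity)]
      have hR1 : RK K δ ≤ 1 / Real.sqrt (-K) := by
        rw [aux_RK, div_le_div_iff₀ (by positivity) hk]
        nlinarith
      have hpow : RK K δ ^ p ≤ (1 / Real.sqrt (-K)) ^ p := Real.rpow_le_rpow hRp.le hR1 hp
      have hc2 : Real.sqrt (-K) * δ ≤ Real.cosh (Real.sqrt (-K) * δ) := by linarith
      have hα1 : δ ^ α ≤ 1 := Real.rpow_le_one_of_one_le_of_nonpos hδ1.le hα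
      calc _ ≤ 1 * (A * ((1 / Real.sqrt (-K)) ^ p / (Real.sqrt (-K) * δ) ^ 2) * M) := by gcongr
        _ = _ := by
          rw [Real.rpow_neg h0.le, Real.rpow_two]
          field_simp
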